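/- Let d ∈ {2,3} and fix s ∈ (0,d). Under Assumptions (A) and (B), one has limsup_{N→∞} (1/N²)·Σ_{1≤i,j≤N, i≠j} |x_{N,i} − x_{N,j}|^{−s} ≤ ∫_{ℝ^d×ℝ^d} |x − y|^{−s}·U(x)·U(y) dx dy, and the double integral on the right-hand side is finite, i.e. there is a constant c_s > 0 (depending on U and s) with ∫_{ℝ^d×ℝ^d} |x − y|^{−s}·U(x)·U(y) dx dy ≤ c_s. -/

import Mathlib

open MeasureTheory Filter Finset Real Topology

noncomputable section

/-!
Fix a scale `η` and replace the Riesz kernel by a bounded continuous minorant that agrees with it at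
distances at least `η`. The truncated energy is weakly continuous, so it passes to the limit along
the empirical measures. What is lost is the interaction of pairs at distance less than `η`, and
separation controls it uniformly in the number `n` of points: the balls of radius
`ℓ / 2 * n ^ (-1 / d)` about the points are disjoint and each has measure of order `1 / n`, so the
average of `‖x i - x j‖ ^ (-s)` over the close points `x j` is at most a constant times the integral
of `‖y‖ ^ (-s)` over `ball 0 (2 * η)`, which tends to `0` with `η` because `s < d`. Hence the limits
`n → ∞` and `η → 0` may be exchanged: the limit measure has finite energy by Fatou's lemma, and the
discrete energies converge to it.
-/

open Metric Module
open scoped BoundedContinuousFunction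

section EmpiricalMeasure

variable {X ι : Type*} [MeasurableSpace X] [Fintype ι] [Nonempty ι]

/-- The empirical measure of a finite family of points: the uniform average of the Dirac masses at
its members, counted with multiplicity. It is a term of `ProbabilityMeasure X` so that weak
convergence of empirical measures is convergence in that space. -/
def empiricalMeasure (x : ι → X) : ProbabilityMeasure X :=
  ⟨(Fintype.card ι : ENNReal)⁻¹ • ∑ i, Measure.dirac (x i), ⟨by
    simp [ENNReal.inv_mul_cancel, Fintype.card_ne_zero]⟩⟩

lemma empiricalMeasure_prod {Y κ : Type*} [MeasurableSpace Y] [Fintype κ] [Nonempty κ]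
    (x : ι → X) (y : κ → Y) :
    (empiricalMeasure x).prod (empiricalMeasure y) = empiricalMeasure (Prod.map x y) := by
  refine Subtype.ext (Measure.prod_eq fun s t _ _ => ?_)
  simp only [empiricalMeasure, ProbabilityMeasure.coe_mk, Measure.smul_apply,
    Measure.coe_finsetSum, Finset.sum_apply, smul_eq_mul, Prod.map_apply, Fintype.sum_prod_type,
    ← Measure.dirac_prod_dirac, Measure.prod_prod, ← Finset.sum_mul_sum, Fintype.card_prod]
  rw [Nat.cast_mul, ENNReal.mul_inv (.inr (ENNReal.natCast_ne_top _))
    (.inl (ENNReal.natCast_ne_top _)), mul_mul_mul_comm]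

variable [MeasurableSingletonClass X]

lemma integral_empiricalMeasure {F : Type*} [NormedAddCommGroup F] [NormedSpace ℝ F]
    [CompleteSpace F] (x : ι → X) (f : X → F) :
    ∫ y, f y ∂(empiricalMeasure x : Measure X) = (Fintype.card ι : ℝ)⁻¹ • ∑ i, f (x i) := by
  rw [empiricalMeasure, ProbabilityMeasure.coe_mk, integral_smul_measure,
    integral_finsetSum_measure fun i _ => integrable_dirac (by simp)]
  simp only [integral_dirac, ENNReal.toReal_inv, ENNReal.toReal_natCast]

lemma integral_empiricalMeasure_prod (x : ι → X) (f : X × X → ℝ) :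
    ∫ z, f z ∂((empiricalMeasure x : Measure X).prod (empiricalMeasure x)) =
      ((Fintype.card ι : ℝ) ^ 2)⁻¹ * ∑ i, ∑ j, f (x i, x j) := by
  rw [← ProbabilityMeasure.toMeasure_prod, empiricalMeasure_prod, integral_empiricalMeasure,
    Fintype.card_prod, Nat.cast_mul, ← sq, Fintype.sum_prod_type, smul_eq_mul]
  rfl

lemma tendsto_empiricalMeasure_iff (𝕜 : Type*) [RCLike 𝕜] [TopologicalSpace X]
    [OpensMeasurableSpace X] {α : Type*} {l : Filter α} {ι : α → Type*} [∀ a, Fintype (ι a)]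
    [∀ a, Nonempty (ι a)] {x : ∀ a, ι a → X} {ν : ProbabilityMeasure X} :
    Tendsto (fun a => empiricalMeasure (x a)) l (𝓝 ν) ↔ ∀ f : X →ᵇ 𝕜,
      Tendsto (fun a => (Fintype.card (ι a) : 𝕜)⁻¹ * ∑ i, f (x a i)) l
        (𝓝 (∫ y, f y ∂(ν : Measure X))) := by
  simp only [ProbabilityMeasure.tendsto_iff_forall_integral_rclike_tendsto 𝕜,
    integral_empiricalMeasure, RCLike.real_smul_eq_coe_mul, RCLike.ofReal_inv,
    RCLike.ofReal_natCast]

end EmpiricalMeasure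

section TruncatedRiesz

variable {E : Type*} [SeminormedAddCommGroup E] {s η : ℝ}

/-- A bounded continuous minorant of the Riesz kernel `‖y‖ ^ (-s)`, equal to it outside the ball of
radius `η`. Multiplying by `min 1 (‖y‖ / η)` makes it vanish at the origin, where the kernel takes
the junk value `0 ^ (-s) = 0`. -/
def truncatedRiesz (s η : ℝ) (y : E) : ℝ := min 1 (‖y‖ / η) * max ‖y‖ η ^ (-s)

lemma truncatedRiesz_of_le_norm (hη : 0 < η) {y : E} (hy : η ≤ ‖y‖) :
    truncatedRiesz s η y = ‖y‖ ^ (-s) := by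
  rw [truncatedRiesz, max_eq_left hy, min_eq_left ((one_le_div hη).2 hy), one_mul]

lemma truncatedRiesz_nonneg (hη : 0 ≤ η) (y : E) : 0 ≤ truncatedRiesz s η y :=
  mul_nonneg (le_min zero_le_one (div_nonneg (norm_nonneg y) hη))
    (rpow_nonneg (le_max_of_le_left (norm_nonneg y)) _)

lemma truncatedRiesz_le_rpow (hs : 0 ≤ s) (hη : 0 < η) (y : E) :
    truncatedRiesz s η y ≤ η ^ (-s) :=
  (mul_le_of_le_one_left (by positivity) (min_le_left _ _)).trans
    (rpow_le_rpow_of_nonpos hη (le_max_right _ _) (neg_nonpos.2 hs))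

lemma truncatedRiesz_le_norm_rpow (hs : 0 ≤ s) (y : E) :
    truncatedRiesz s η y ≤ ‖y‖ ^ (-s) := by
  rcases (norm_nonneg y).eq_or_lt with hy | hy
  · rw [truncatedRiesz, ← hy, zero_div, min_eq_right zero_le_one, zero_mul]
    positivity
  · exact (mul_le_of_le_one_left (by positivity) (min_le_left _ _)).trans
      (rpow_le_rpow_of_nonpos hy (le_max_left _ _) (neg_nonpos.2 hs))

lemma continuous_truncatedRiesz (hη : 0 < η) : Continuous (truncatedRiesz s η : E → ℝ) :=
  (continuous_const.min (continuous_norm.div_const η)).mul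
    ((continuous_norm.max continuous_const).rpow_const fun _ => .inl (lt_max_of_lt_right hη).ne')

lemma measurable_truncatedRiesz [MeasurableSpace E] [OpensMeasurableSpace E] (s η : ℝ) :
    Measurable (truncatedRiesz s η : E → ℝ) := by
  unfold truncatedRiesz
  fun_prop

lemma truncatedRiesz_eventuallyEq (hs : 0 < s) (y : E) :
    ∀ᶠ η in 𝓝[>] 0, truncatedRiesz s η y = ‖y‖ ^ (-s) := by
  rcases (norm_nonneg y).eq_or_lt with hy | hy
  · refine Eventually.of_forall fun η => ?_
    rw [truncatedRiesz, ← hy, zero_div, min_eq_right zero_le_one, zero_mul,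
      zero_rpow (neg_ne_zero.2 hs.ne')]
  · filter_upwards [Ioc_mem_nhdsGT hy] with η hη using truncatedRiesz_of_le_norm hη.1 hη.2

/-- The truncated Riesz kernel of the difference of two points, bundled as a test function for weak
convergence of product measures. -/
def truncatedRieszBCF (hs : 0 ≤ s) (hη : 0 < η) : E × E →ᵇ ℝ :=
  .ofNormedAddCommGroup (fun z => truncatedRiesz s η (z.1 - z.2))
    ((continuous_truncatedRiesz hη).comp continuous_sub) (η ^ (-s)) fun z => by
      rw [norm_of_nonneg (truncatedRiesz_nonneg hη.le _)]
      exact truncatedRiesz_le_rpow hs hη _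

end TruncatedRiesz

section RieszEnergy

variable {E : Type*} [NormedAddCommGroup E] [MeasurableSpace E] {s η : ℝ}

/-- The Riesz `s`-energy `∬ ‖y - z‖ ^ (-s) dν dν`. Since `0 ^ (-s) = 0` for `s ≠ 0`, the diagonal
does not contribute; on an empirical measure this is the usual sum over pairs of distinct points. -/
def rieszEnergy (s : ℝ) (ν : Measure E) : ℝ := ∫ z, ‖z.1 - z.2‖ ^ (-s) ∂(ν.prod ν)

/-- The Riesz energy with the kernel replaced by its bounded continuous truncation at scale `η`. -/
def truncatedRieszEnergy (s η : ℝ) (ν : Measure E) : ℝ :=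
  ∫ z, truncatedRiesz s η (z.1 - z.2) ∂(ν.prod ν)

variable [SecondCountableTopology E] [BorelSpace E]

lemma integrable_truncatedRiesz_sub (hs : 0 ≤ s) (hη : 0 < η) (ν : Measure E) [IsFiniteMeasure ν] :
    Integrable (fun z : E × E => truncatedRiesz s η (z.1 - z.2)) (ν.prod ν) :=
  (truncatedRieszBCF hs hη).integrable _

lemma continuous_truncatedRieszEnergy (hs : 0 ≤ s) (hη : 0 < η) :
    Continuous fun ν : ProbabilityMeasure E => truncatedRieszEnergy s η (ν : Measure E) :=
  (ProbabilityMeasure.continuous_integral_boundedContinuousFunction (truncatedRieszBCF hs hη)).comp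
    (ProbabilityMeasure.continuous_prod.comp (continuous_id.prodMk continuous_id))

lemma integrable_norm_sub_rpow_of_truncatedRieszEnergy_le (hs : 0 < s) {ν : Measure E}
    [IsFiniteMeasure ν] {C : ℝ} (hC : ∀ᶠ η in 𝓝[>] 0, truncatedRieszEnergy s η ν ≤ C) :
    Integrable (fun z : E × E => ‖z.1 - z.2‖ ^ (-s)) (ν.prod ν) := by
  refine ⟨(continuous_sub.norm.measurable.pow_const _).aestronglyMeasurable, ?_⟩
  have hlim (z : E × E) : liminf (fun η => ‖truncatedRiesz s η (z.1 - z.2)‖ₑ) (𝓝[>] 0) =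
      ‖‖z.1 - z.2‖ ^ (-s)‖ₑ :=
    (tendsto_const_nhds.congr' ((truncatedRiesz_eventuallyEq hs (z.1 - z.2)).mono
      fun _ h => by rw [h])).liminf_eq
  calc ∫⁻ z, ‖‖z.1 - z.2‖ ^ (-s)‖ₑ ∂(ν.prod ν)
      = ∫⁻ z, liminf (fun η => ‖truncatedRiesz s η (z.1 - z.2)‖ₑ) (𝓝[>] 0) ∂(ν.prod ν) := by
        simp_rw [hlim]
    _ ≤ liminf (fun η => ∫⁻ z, ‖truncatedRiesz s η (z.1 - z.2)‖ₑ ∂(ν.prod ν)) (𝓝[>] 0) :=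
        lintegral_liminf_le fun η =>
          ((measurable_truncatedRiesz s η).comp continuous_sub.measurable).enorm
    _ ≤ ENNReal.ofReal C := by
        refine liminf_le_of_frequently_le' (Eventually.frequently ?_)
        filter_upwards [hC, self_mem_nhdsWithin] with η hη hη0
        rw [← ofReal_integral_norm_eq_lintegral_enorm
          (integrable_truncatedRiesz_sub hs.le hη0 ν)]
        refine ENNReal.ofReal_le_ofReal (le_of_eq_of_le (integral_congr_ae (ae_of_all _ fun z =>
          norm_of_nonneg (truncatedRiesz_nonneg (Set.mem_Ioi.1 hη0).le _))) hη)
    _ < ⊤ := ENNReal.ofReal_lt_top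

lemma tendsto_truncatedRieszEnergy (hs : 0 < s) {ν : Measure E}
    (hν : Integrable (fun z : E × E => ‖z.1 - z.2‖ ^ (-s)) (ν.prod ν)) :
    Tendsto (fun η => truncatedRieszEnergy s η ν) (𝓝[>] 0) (𝓝 (rieszEnergy s ν)) := by
  refine tendsto_integral_filter_of_dominated_convergence _ ?_ ?_ hν ?_
  · exact .of_forall fun η =>
      ((measurable_truncatedRiesz s η).comp continuous_sub.measurable).aestronglyMeasurable
  · filter_upwards [self_mem_nhdsWithin] with η hη
    refine ae_of_all _ fun z => ?_
    rw [norm_of_nonneg (truncatedRiesz_nonneg (Set.mem_Ioi.1 hη).le _)]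
    exact truncatedRiesz_le_norm_rpow hs.le _
  · exact ae_of_all _ fun z => tendsto_const_nhds.congr'
      ((truncatedRiesz_eventuallyEq hs _).mono fun _ h => h.symm)

end RieszEnergy

section HaarMeasure

lemma measureReal_ball_pos {X : Type*} [PseudoMetricSpace X] [ProperSpace X] [MeasurableSpace X]
    (μ : Measure X) [μ.IsOpenPosMeasure] [IsFiniteMeasureOnCompacts μ] (y : X) {r : ℝ}
    (hr : 0 < r) : 0 < μ.real (ball y r) :=
  ENNReal.toReal_pos (measure_ball_pos μ y hr).ne' measure_ball_lt_top.ne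

variable {E : Type*} [NormedAddCommGroup E] [NormedSpace ℝ E] [FiniteDimensional ℝ E]
  [MeasurableSpace E] [BorelSpace E] (μ : Measure E) [μ.IsAddHaarMeasure] {s : ℝ}

lemma measureReal_ball_mul_rpow [Nontrivial E] (ρ : ℝ) {t : ℝ} (ht : 0 < t) :
    μ.real (ball 0 (ρ * t ^ (-(1 : ℝ) / finrank ℝ E))) = μ.real (ball 0 ρ) / t := by
  have hd : (finrank ℝ E : ℝ) ≠ 0 := Nat.cast_ne_zero.2 finrank_pos.ne'
  rw [mul_comm ρ, measureReal_def, Measure.addHaar_ball_mul_of_pos μ 0 (by positivity),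
    ENNReal.toReal_mul, ENNReal.toReal_ofReal (by positivity), ← rpow_natCast, ← rpow_mul ht.le,
    div_mul_cancel₀ _ hd, rpow_neg_one, inv_mul_eq_div, measureReal_def]

lemma integrableOn_ball_norm_rpow_neg [Nontrivial E] (hs : s < finrank ℝ E) (r : ℝ) :
    IntegrableOn (fun y : E => ‖y‖ ^ (-s)) (ball 0 r) μ := by
  refine integrableOn_ball_of_norm_le_rpow finrank_pos hs (C := 1) (ae_of_all _ fun y => ?_)
    (measurable_norm.pow_const _).aestronglyMeasurable
  rw [one_mul, norm_of_nonneg (by positivity)]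

lemma tendsto_setIntegral_ball_norm_rpow_neg [Nontrivial E] (hs : s < finrank ℝ E) :
    Tendsto (fun η => ∫ y in ball (0 : E) η, ‖y‖ ^ (-s) ∂μ) (𝓝[>] 0) (𝓝 0) := by
  have hvol : Tendsto (μ.restrict (ball 0 1) ∘ ball (0 : E)) (𝓝[>] 0) (𝓝 0) := by
    have h := tendsto_measure_biInter_gt (μ := μ.restrict (ball 0 1)) (s := ball (0 : E)) (a := 0)
      (fun _ _ => measurableSet_ball.nullMeasurableSet) (fun _ _ _ => ball_subset_ball)
      ⟨1, one_pos, by rw [Measure.restrict_apply_self]; exact measure_ball_lt_top.ne⟩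
    rwa [biInter_gt_ball, closedBall_zero, measure_singleton] at h
  refine ((integrableOn_ball_norm_rpow_neg μ hs 1).tendsto_setIntegral_nhds_zero hvol).congr' ?_
  filter_upwards [Ioc_mem_nhdsGT one_pos] with η hη
  rw [Measure.restrict_restrict_of_subset (ball_subset_ball hη.2)]

end HaarMeasure

section Separation

lemma norm_rpow_neg_le_of_mem_ball {E : Type*} [SeminormedAddCommGroup E] {s r : ℝ} (hs : 0 ≤ s)
    {p y : E} (hp : r ≤ ‖p‖) (hy : y ∈ ball p r) : ‖p‖ ^ (-s) ≤ 2 ^ s * ‖y‖ ^ (-s) := by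
  rw [mem_ball_iff_norm'] at hy
  have hy_pos : 0 < ‖y‖ := by linarith [norm_sub_norm_le p y]
  have hy_le : ‖y‖ ≤ 2 * ‖p‖ := by linarith [norm_sub_norm_le y p, norm_sub_rev y p]
  calc ‖p‖ ^ (-s) = 2 ^ s * (2 * ‖p‖) ^ (-s) := by
        rw [mul_rpow zero_le_two (norm_nonneg p), ← mul_assoc, ← rpow_add two_pos,
          add_neg_cancel, rpow_zero, one_mul]
    _ ≤ 2 ^ s * ‖y‖ ^ (-s) :=
        mul_le_mul_of_nonneg_left (rpow_le_rpow_of_nonpos hy_pos hy_le (neg_nonpos.2 hs))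
          (by positivity)

lemma nontrivial_of_lt_finrank {E : Type*} [AddCommGroup E] [Module ℝ E] {s : ℝ} (hs0 : 0 ≤ s)
    (hs : s < finrank ℝ E) : Nontrivial E :=
  nontrivial_of_finrank_pos (R := ℝ) (Nat.cast_pos.1 (hs0.trans_lt hs))

variable {E : Type*} [NormedAddCommGroup E] [NormedSpace ℝ E] [FiniteDimensional ℝ E]
  [MeasurableSpace E] [BorelSpace E] (μ : Measure E) [μ.IsAddHaarMeasure]
  {ι : Type*} {s r η : ℝ}

lemma sum_setIntegral_le_setIntegral {X : Type*} [MeasurableSpace X] {m : Measure X} {f : X → ℝ}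
    (hf : 0 ≤ f) {t : Finset ι} {A : ι → Set X} {B : Set X} (hA : ∀ i ∈ t, MeasurableSet (A i))
    (hdisj : Set.PairwiseDisjoint (t : Set ι) A) (hsub : ∀ i ∈ t, A i ⊆ B)
    (hint : IntegrableOn f B m) : ∑ i ∈ t, ∫ y in A i, f y ∂m ≤ ∫ y in B, f y ∂m := by
  rw [← integral_biUnion_finset t hA hdisj fun i hi => hint.mono_set (hsub i hi)]
  exact setIntegral_mono_set hint (ae_of_all _ hf) (Set.iUnion₂_subset hsub).eventuallyLE

lemma norm_rpow_neg_mul_measureReal_ball_le (hs0 : 0 ≤ s) (hs : s < finrank ℝ E)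
    {p : E} (hp : r ≤ ‖p‖) :
    ‖p‖ ^ (-s) * μ.real (ball 0 r) ≤ 2 ^ s * ∫ y in ball p r, ‖y‖ ^ (-s) ∂μ := by
  have := nontrivial_of_lt_finrank hs0 hs
  have hint : IntegrableOn (fun y : E => ‖y‖ ^ (-s)) (ball p r) μ :=
    (integrableOn_ball_norm_rpow_neg μ hs (r + ‖p‖)).mono_set
      (ball_subset_ball' (by rw [dist_zero_right]))
  rw [← Measure.addHaar_real_ball_center μ p r, mul_comm, ← smul_eq_mul, ← setIntegral_const,
    ← integral_const_mul]
  exact setIntegral_mono_on (integrableOn_const measure_ball_lt_top.ne) (hint.const_mul _)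
    measurableSet_ball fun y hy => norm_rpow_neg_le_of_mem_ball hs0 hp hy

lemma sum_norm_rpow_neg_mul_measureReal_ball_le (hs0 : 0 ≤ s) (hs : s < finrank ℝ E)
    {t : Finset ι} {p : ι → E}
    (hsep : (t : Set ι).Pairwise fun i j => 2 * r ≤ ‖p i - p j‖) (hlow : ∀ i ∈ t, r ≤ ‖p i‖)
    (hup : ∀ i ∈ t, ‖p i‖ < η) :
    (∑ i ∈ t, ‖p i‖ ^ (-s)) * μ.real (ball 0 r) ≤
      2 ^ s * ∫ y in ball (0 : E) (2 * η), ‖y‖ ^ (-s) ∂μ := by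
  have := nontrivial_of_lt_finrank hs0 hs
  have hdisj : Set.PairwiseDisjoint (t : Set ι) fun i => ball (p i) r :=
    hsep.mono' fun i j hij => ball_disjoint_ball (by rw [dist_eq_norm, ← two_mul]; exact hij)
  have hsub : ∀ i ∈ t, ball (p i) r ⊆ ball 0 (2 * η) := fun i hi =>
    ball_subset_ball' (by rw [dist_zero_right]; linarith [hlow i hi, hup i hi])
  calc (∑ i ∈ t, ‖p i‖ ^ (-s)) * μ.real (ball 0 r)
      ≤ ∑ i ∈ t, 2 ^ s * ∫ y in ball (p i) r, ‖y‖ ^ (-s) ∂μ := by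
        rw [Finset.sum_mul]
        exact Finset.sum_le_sum fun i hi =>
          norm_rpow_neg_mul_measureReal_ball_le μ hs0 hs (hlow i hi)
    _ ≤ 2 ^ s * ∫ y in ball 0 (2 * η), ‖y‖ ^ (-s) ∂μ := by
        rw [← Finset.mul_sum]
        gcongr
        exact sum_setIntegral_le_setIntegral (fun y => by positivity)
          (fun _ _ => measurableSet_ball) hdisj hsub (integrableOn_ball_norm_rpow_neg μ hs _)

lemma sum_norm_sub_rpow_neg_le [Fintype ι] (hs0 : 0 < s) (hs : s < finrank ℝ E)
    (hr : 0 < r) (hη : 0 < η) {x : ι → E} (hsep : Pairwise fun i j => 2 * r ≤ ‖x i - x j‖)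
    (i : ι) :
    ∑ j, ‖x i - x j‖ ^ (-s) ≤ ∑ j, truncatedRiesz s η (x i - x j) +
      2 ^ s * (∫ y in ball (0 : E) (2 * η), ‖y‖ ^ (-s) ∂μ) / μ.real (ball 0 r) := by
  classical
  have hnear := sum_norm_rpow_neg_mul_measureReal_ball_le μ hs0.le hs (r := r)
    (t := {j | i ≠ j ∧ ‖x i - x j‖ < η}) (p := fun j => x i - x j)
    (fun j _ k _ hjk => by simpa only [sub_sub_sub_cancel_left] using hsep hjk.symm)
    (fun j hj => (le_mul_of_one_le_left hr.le one_le_two).trans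
      (hsep (Finset.mem_filter.1 hj).2.1))
    (fun j hj => (Finset.mem_filter.1 hj).2.2)
  rw [← le_div_iff₀ (measureReal_ball_pos μ 0 hr), Finset.sum_filter] at hnear
  refine le_trans ?_ (add_le_add_right hnear _)
  rw [← Finset.sum_add_distrib]
  refine Finset.sum_le_sum fun j _ => ?_
  have htrunc := truncatedRiesz_nonneg (s := s) hη.le (x i - x j)
  rcases eq_or_ne i j with rfl | hij
  · simpa [zero_rpow (neg_ne_zero.2 hs0.ne')] using htrunc
  rcases lt_or_ge ‖x i - x j‖ η with hlt | hge
  · rwa [if_pos ⟨hij, hlt⟩, le_add_iff_nonneg_left]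
  · rw [if_neg (not_and_of_not_right _ hge.not_gt), truncatedRiesz_of_le_norm hη hge, add_zero]

end Separation

section EnergyOfEmpiricalMeasure

variable {E : Type*} [NormedAddCommGroup E] [MeasurableSpace E] [MeasurableSingletonClass E]
  {ι : Type*} [Fintype ι] [Nonempty ι] {s : ℝ}

lemma rieszEnergy_empiricalMeasure (s : ℝ) (x : ι → E) :
    rieszEnergy s (empiricalMeasure x : Measure E) =
      ((Fintype.card ι : ℝ) ^ 2)⁻¹ * ∑ i, ∑ j, ‖x i - x j‖ ^ (-s) :=
  integral_empiricalMeasure_prod x _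

lemma truncatedRieszEnergy_empiricalMeasure (s η : ℝ) (x : ι → E) :
    truncatedRieszEnergy s η (empiricalMeasure x : Measure E) =
      ((Fintype.card ι : ℝ) ^ 2)⁻¹ * ∑ i, ∑ j, truncatedRiesz s η (x i - x j) :=
  integral_empiricalMeasure_prod x _

lemma rieszEnergy_empiricalMeasure_of_ne [DecidableEq ι] (hs : s ≠ 0) (x : ι → E) :
    rieszEnergy s (empiricalMeasure x : Measure E) =
      ((Fintype.card ι : ℝ) ^ 2)⁻¹ *
        ∑ i, ∑ j, if i = j then 0 else ‖x i - x j‖ ^ (-s) := by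
  rw [rieszEnergy_empiricalMeasure]
  congr 1
  refine Finset.sum_congr rfl fun i _ => Finset.sum_congr rfl fun j _ => ?_
  split_ifs with hij
  · rw [hij, sub_self, norm_zero, zero_rpow (neg_ne_zero.2 hs)]
  · rfl

lemma truncatedRieszEnergy_empiricalMeasure_le (hs : 0 ≤ s) (η : ℝ) (x : ι → E) :
    truncatedRieszEnergy s η (empiricalMeasure x : Measure E) ≤
      rieszEnergy s (empiricalMeasure x : Measure E) := by
  rw [rieszEnergy_empiricalMeasure, truncatedRieszEnergy_empiricalMeasure]
  gcongr
  exact truncatedRiesz_le_norm_rpow hs _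

end EnergyOfEmpiricalMeasure

section UniformTruncation

variable {E : Type*} [NormedAddCommGroup E] [NormedSpace ℝ E] [FiniteDimensional ℝ E]
  [MeasurableSpace E] [BorelSpace E] {s η ℓ : ℝ}

lemma rieszEnergy_empiricalMeasure_le_add (μ : Measure E) [μ.IsAddHaarMeasure]
    {ι : Type*} [Fintype ι] [Nonempty ι] (hs0 : 0 < s) (hs : s < finrank ℝ E) (hη : 0 < η)
    (hℓ : 0 < ℓ) {x : ι → E} (hsep : Pairwise fun i j =>
      ℓ * (Fintype.card ι : ℝ) ^ (-(1 : ℝ) / finrank ℝ E) ≤ ‖x i - x j‖) :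
    rieszEnergy s (empiricalMeasure x : Measure E) ≤
      truncatedRieszEnergy s η (empiricalMeasure x : Measure E) +
        2 ^ s * (∫ y in ball (0 : E) (2 * η), ‖y‖ ^ (-s) ∂μ) / μ.real (ball 0 (ℓ / 2)) := by
  have := nontrivial_of_lt_finrank hs0.le hs
  have hcard : (0 : ℝ) < Fintype.card ι := Nat.cast_pos.2 Fintype.card_pos
  have hrow := sum_norm_sub_rpow_neg_le μ hs0 hs (x := x) (η := η)
    (r := ℓ / 2 * (Fintype.card ι : ℝ) ^ (-(1 : ℝ) / finrank ℝ E)) (by positivity) hη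
    (hsep.mono fun i j hij => by rwa [← mul_assoc, mul_div_cancel₀ _ two_ne_zero])
  rw [measureReal_ball_mul_rpow μ _ hcard] at hrow
  rw [rieszEnergy_empiricalMeasure, truncatedRieszEnergy_empiricalMeasure]
  refine (mul_le_mul_of_nonneg_left (Finset.sum_le_sum fun i _ => hrow i)
    (by positivity)).trans_eq ?_
  rw [Finset.sum_add_distrib, Finset.sum_const, card_univ, nsmul_eq_mul, mul_add]
  field_simp

lemma tendstoUniformly_truncatedRieszEnergy {α : Type*} {ι : α → Type*} [∀ a, Fintype (ι a)]
    [∀ a, Nonempty (ι a)] {x : ∀ a, ι a → E} (hs0 : 0 < s) (hs : s < finrank ℝ E) (hℓ : 0 < ℓ)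
    (hsep : ∀ a, Pairwise fun i j =>
      ℓ * (Fintype.card (ι a) : ℝ) ^ (-(1 : ℝ) / finrank ℝ E) ≤ ‖x a i - x a j‖) :
    TendstoUniformly
      (fun η a => truncatedRieszEnergy s η (empiricalMeasure (x a) : Measure E))
      (fun a => rieszEnergy s (empiricalMeasure (x a) : Measure E)) (𝓝[>] 0) := by
  have := nontrivial_of_lt_finrank hs0.le hs
  have hdouble : Tendsto (fun η : ℝ => 2 * η) (𝓝[>] 0) (𝓝[>] 0) :=
    tendsto_nhdsWithin_iff.2 ⟨((continuous_const_mul 2).tendsto' 0 0 (mul_zero 2)).mono_left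
      nhdsWithin_le_nhds, eventually_mem_nhdsWithin.mono fun _ hη =>
        Set.mem_Ioi.2 (mul_pos two_pos hη)⟩
  have herr : Tendsto (fun η => 2 ^ s * (∫ y in ball (0 : E) (2 * η), ‖y‖ ^ (-s) ∂Measure.addHaar) /
      Measure.addHaar.real (ball (0 : E) (ℓ / 2))) (𝓝[>] 0) (𝓝 0) := by
    simpa using (((tendsto_setIntegral_ball_norm_rpow_neg Measure.addHaar hs).comp
      hdouble).const_mul (2 ^ s)).div_const (Measure.addHaar.real (ball (0 : E) (ℓ / 2)))
  refine Metric.tendstoUniformly_iff.2 fun ε hε => ?_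
  filter_upwards [herr.eventually_lt_const hε, self_mem_nhdsWithin] with η hη hη0 a
  rw [Real.dist_eq, abs_of_nonneg
    (sub_nonneg.2 (truncatedRieszEnergy_empiricalMeasure_le hs0.le η (x a)))]
  linarith [rieszEnergy_empiricalMeasure_le_add Measure.addHaar hs0 hs hη0 hℓ (hsep a)]

end UniformTruncation

section Convergence

variable {E : Type*} [NormedAddCommGroup E] [NormedSpace ℝ E] [FiniteDimensional ℝ E]
  [MeasurableSpace E] [BorelSpace E] {s ℓ : ℝ} {α : Type*} {l : Filter α} {ι : α → Type*}
  [∀ a, Fintype (ι a)] [∀ a, Nonempty (ι a)] {x : ∀ a, ι a → E} {ν : ProbabilityMeasure E}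

theorem integrable_norm_sub_rpow_of_tendsto_empiricalMeasure [l.NeBot] (hs0 : 0 < s)
    (hs : s < finrank ℝ E) (hℓ : 0 < ℓ)
    (hsep : ∀ a, Pairwise fun i j =>
      ℓ * (Fintype.card (ι a) : ℝ) ^ (-(1 : ℝ) / finrank ℝ E) ≤ ‖x a i - x a j‖)
    (hν : Tendsto (fun a => empiricalMeasure (x a)) l (𝓝 ν)) :
    Integrable (fun z : E × E => ‖z.1 - z.2‖ ^ (-s)) ((ν : Measure E).prod ν) := by
  have hlim {η : ℝ} (hη : 0 < η) :=
    ((continuous_truncatedRieszEnergy hs0.le hη).tendsto ν).comp hν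
  obtain ⟨η₀, hclose, hη₀⟩ := ((Metric.tendstoUniformly_iff.1
    (tendstoUniformly_truncatedRieszEnergy hs0 hs hℓ hsep) 1 one_pos).and
      self_mem_nhdsWithin).exists
  refine integrable_norm_sub_rpow_of_truncatedRieszEnergy_le hs0
    (C := truncatedRieszEnergy s η₀ (ν : Measure E) + 1) ?_
  filter_upwards [self_mem_nhdsWithin] with η hη
  refine le_of_tendsto_of_tendsto' (hlim hη) ((hlim hη₀).add_const 1) fun a => ?_
  calc truncatedRieszEnergy s η (empiricalMeasure (x a) : Measure E)
      ≤ rieszEnergy s (empiricalMeasure (x a) : Measure E) :=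
        truncatedRieszEnergy_empiricalMeasure_le hs0.le η (x a)
    _ ≤ truncatedRieszEnergy s η₀ (empiricalMeasure (x a) : Measure E) + 1 := by
        linarith [(abs_lt.1 (hclose a)).2]

theorem tendsto_rieszEnergy_empiricalMeasure (hs0 : 0 < s) (hs : s < finrank ℝ E) (hℓ : 0 < ℓ)
    (hsep : ∀ a, Pairwise fun i j =>
      ℓ * (Fintype.card (ι a) : ℝ) ^ (-(1 : ℝ) / finrank ℝ E) ≤ ‖x a i - x a j‖)
    (hν : Tendsto (fun a => empiricalMeasure (x a)) l (𝓝 ν)) :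
    Tendsto (fun a => rieszEnergy s (empiricalMeasure (x a) : Measure E)) l
      (𝓝 (rieszEnergy s (ν : Measure E))) := by
  rcases l.eq_or_neBot with rfl | _
  · exact tendsto_bot
  refine (tendstoUniformly_truncatedRieszEnergy hs0 hs hℓ hsep).tendsto_of_eventually_tendsto ?_
    (tendsto_truncatedRieszEnergy hs0
      (integrable_norm_sub_rpow_of_tendsto_empiricalMeasure hs0 hs hℓ hsep hν))
  filter_upwards [self_mem_nhdsWithin] with η hη
  exact ((continuous_truncatedRieszEnergy hs0.le hη).tendsto ν).comp hν

end Convergence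

section Density

variable {X : Type*} [MeasurableSpace X] {m : Measure X} {U : X → ℝ}

lemma isProbabilityMeasure_withDensity_ofReal (hU0 : 0 ≤ᵐ[m] U) (hU : ∫ y, U y ∂m = 1) :
    IsProbabilityMeasure (m.withDensity fun y => ENNReal.ofReal (U y)) := by
  have hint : Integrable U m := .of_integral_ne_zero (hU.trans_ne one_ne_zero)
  constructor
  rw [withDensity_apply _ .univ, Measure.restrict_univ,
    ← ofReal_integral_eq_lintegral_ofReal hint hU0, hU, ENNReal.ofReal_one]

lemma integral_withDensity_ofReal {F : Type*} [NormedAddCommGroup F] [NormedSpace ℝ F]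
    (hU : AEMeasurable U m) (hU0 : 0 ≤ᵐ[m] U) (f : X → F) :
    ∫ y, f y ∂(m.withDensity fun y => ENNReal.ofReal (U y)) = ∫ y, U y • f y ∂m := by
  rw [integral_withDensity_eq_integral_toReal_smul₀ hU.ennreal_ofReal
    (ae_of_all _ fun _ => ENNReal.ofReal_lt_top)]
  exact integral_congr_ae (hU0.mono fun y hy => by simp only [ENNReal.toReal_ofReal hy])

lemma integrable_withDensity_ofReal_iff {F : Type*} [NormedAddCommGroup F] [NormedSpace ℝ F]
    (hU : AEMeasurable U m) (hU0 : 0 ≤ᵐ[m] U) (f : X → F) :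
    Integrable f (m.withDensity fun y => ENNReal.ofReal (U y)) ↔
      Integrable (fun y => U y • f y) m := by
  rw [integrable_withDensity_iff_integrable_smul₀' hU.ennreal_ofReal
    (ae_of_all _ fun _ => ENNReal.ofReal_lt_top)]
  exact integrable_congr (hU0.mono fun y hy => by simp only [ENNReal.toReal_ofReal hy])

lemma ae_prod_mul_nonneg (hU0 : 0 ≤ᵐ[m] U) : 0 ≤ᵐ[m.prod m] fun z => U z.1 * U z.2 := by
  filter_upwards [Measure.quasiMeasurePreserving_fst.ae hU0,
    Measure.quasiMeasurePreserving_snd.ae hU0] with z h₁ h₂ using mul_nonneg h₁ h₂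

variable [SFinite m]

lemma withDensity_ofReal_prod_self (hU : AEMeasurable U m) (hU0 : 0 ≤ᵐ[m] U) :
    (m.withDensity fun y => ENNReal.ofReal (U y)).prod
        (m.withDensity fun y => ENNReal.ofReal (U y)) =
      (m.prod m).withDensity fun z => ENNReal.ofReal (U z.1 * U z.2) := by
  rw [prod_withDensity₀ hU.ennreal_ofReal hU.ennreal_ofReal]
  exact withDensity_congr_ae ((Measure.quasiMeasurePreserving_fst.ae hU0).mono fun _ hz =>
    (ENNReal.ofReal_mul hz).symm)

lemma integral_withDensity_ofReal_prod_self (hU : AEMeasurable U m) (hU0 : 0 ≤ᵐ[m] U)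
    (f : X × X → ℝ) :
    ∫ z, f z ∂((m.withDensity fun y => ENNReal.ofReal (U y)).prod
        (m.withDensity fun y => ENNReal.ofReal (U y))) =
      ∫ z, f z * U z.1 * U z.2 ∂(m.prod m) := by
  rw [withDensity_ofReal_prod_self hU hU0, integral_withDensity_ofReal
    (hU.comp_fst.fun_mul hU.comp_snd) (ae_prod_mul_nonneg hU0)]
  simp only [smul_eq_mul, mul_comm, mul_left_comm]

lemma integrable_withDensity_ofReal_prod_self_iff (hU : AEMeasurable U m) (hU0 : 0 ≤ᵐ[m] U)
    (f : X × X → ℝ) :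
    Integrable f ((m.withDensity fun y => ENNReal.ofReal (U y)).prod
        (m.withDensity fun y => ENNReal.ofReal (U y))) ↔
      Integrable (fun z => f z * U z.1 * U z.2) (m.prod m) := by
  rw [withDensity_ofReal_prod_self hU hU0, integrable_withDensity_ofReal_iff
    (hU.comp_fst.fun_mul hU.comp_snd) (ae_prod_mul_nonneg hU0)]
  simp only [smul_eq_mul, mul_comm, mul_left_comm]

end Density

theorem stmt_6_general {E : Type*} [NormedAddCommGroup E] [NormedSpace ℝ E]
    [FiniteDimensional ℝ E] [MeasurableSpace E] [BorelSpace E] (μ : Measure E) [μ.IsAddHaarMeasure]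
    {𝕜 : Type*} [RCLike 𝕜] {s ℓ : ℝ} (hs0 : 0 < s) (hs : s < finrank ℝ E) {U : E → ℝ}
    (hU0 : 0 ≤ᵐ[μ] U) (hU : ∫ y, U y ∂μ = 1) {x : (N : ℕ) → Fin N → E}
    (hx : ∀ f : E →ᵇ 𝕜, Tendsto (fun N : ℕ => (N : 𝕜)⁻¹ * ∑ j, f (x N j)) atTop
      (𝓝 (∫ y, f y * (U y : 𝕜) ∂μ)))
    (hℓ : 0 < ℓ) (hsep : ∀ N : ℕ, Pairwise fun i j =>
      ℓ * (N : ℝ) ^ (-(1 : ℝ) / finrank ℝ E) ≤ ‖x N i - x N j‖) :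
    Integrable (fun z : E × E => ‖z.1 - z.2‖ ^ (-s) * U z.1 * U z.2) (μ.prod μ) ∧
    Tendsto (fun N : ℕ => ((N : ℝ) ^ 2)⁻¹ * ∑ i, ∑ j,
        if i = j then 0 else ‖x N i - x N j‖ ^ (-s)) atTop
      (𝓝 (∫ z : E × E, ‖z.1 - z.2‖ ^ (-s) * U z.1 * U z.2 ∂(μ.prod μ))) := by
  have hUm : AEMeasurable U μ :=
    (Integrable.of_integral_ne_zero (hU.trans_ne one_ne_zero)).aemeasurable
  let ν : ProbabilityMeasure E := ⟨_, isProbabilityMeasure_withDensity_ofReal hU0 hU⟩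
  have hν : Tendsto (fun N => empiricalMeasure (x (N + 1))) atTop (𝓝 ν) := by
    refine (tendsto_empiricalMeasure_iff 𝕜).2 fun f => ?_
    have hlim := (tendsto_add_atTop_iff_nat 1).2 (hx f)
    simpa [ν, integral_withDensity_ofReal hUm hU0, RCLike.real_smul_eq_coe_mul, mul_comm] using hlim
  have hsep' (N : ℕ) : Pairwise fun i j => ℓ * (Fintype.card (Fin (N + 1)) : ℝ) ^
      (-(1 : ℝ) / finrank ℝ E) ≤ ‖x (N + 1) i - x (N + 1) j‖ := by
    simpa only [Fintype.card_fin] using hsep (N + 1)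
  refine ⟨(integrable_withDensity_ofReal_prod_self_iff hUm hU0 _).1
    (integrable_norm_sub_rpow_of_tendsto_empiricalMeasure hs0 hs hℓ hsep' hν),
    (tendsto_add_atTop_iff_nat 1).1 ?_⟩
  rw [← integral_withDensity_ofReal_prod_self hUm hU0]
  refine (tendsto_rieszEnergy_empiricalMeasure hs0 hs hℓ hsep' hν).congr fun N => ?_
  rw [rieszEnergy_empiricalMeasure_of_ne hs0.ne', Fintype.card_fin]

/-- Riesz-energy bound. Under Assumptions (A) and (B), for `s ∈ (0,d)`,
`limsup_N (1/N²)·Σ_{i≠j} |x_i − x_j|^{−s} ≤ ∫∫ |x−y|^{−s} U(x) U(y) dx dy`, and the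
double integral is finite (bounded by some constant `c_s > 0`). -/
theorem stmt_6
    (d : ℕ) (hd : d = 2 ∨ d = 3)
    (s : ℝ) (hs0 : 0 < s) (hsd : s < d)
    (U : EuclideanSpace ℝ (Fin d) → ℝ)
    (hU_nonneg : ∀ y, 0 ≤ U y)
    (hU_bdd : ∃ M : ℝ, ∀ y, U y ≤ M)
    (hU_supp : HasCompactSupport U)
    (hU_int : ∫ y, U y = 1)
    (x : (N : ℕ) → Fin N → EuclideanSpace ℝ (Fin d))
    (hx_supp : ∀ N (j : Fin N), x N j ∈ tsupport U)
    (hA : ∀ f : EuclideanSpace ℝ (Fin d) → ℂ, Continuous f → (∃ M, ∀ y, ‖f y‖ ≤ M) →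
      Tendsto (fun N : ℕ => (N : ℂ)⁻¹ * ∑ j : Fin N, f (x N j)) atTop
        (𝓝 (∫ y, f y * (U y : ℂ))))
    (ℓ : ℝ) (hℓ : 0 < ℓ)
    (hB : ∀ N : ℕ, ∀ i j : Fin N, i ≠ j →
      ℓ * (N : ℝ) ^ (-(1 : ℝ) / d) ≤ ‖x N i - x N j‖) :
    Integrable (fun z : EuclideanSpace ℝ (Fin d) × EuclideanSpace ℝ (Fin d) =>
        ‖z.1 - z.2‖ ^ (-s) * U z.1 * U z.2) ∧
    limsup
      (fun N : ℕ => ((N : ℝ) ^ 2)⁻¹ * ∑ i : Fin N, ∑ j : Fin N,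
        if i = j then 0 else ‖x N i - x N j‖ ^ (-s)) atTop
      ≤ ∫ z : EuclideanSpace ℝ (Fin d) × EuclideanSpace ℝ (Fin d),
          ‖z.1 - z.2‖ ^ (-s) * U z.1 * U z.2 ∧
    ∃ c_s : ℝ, 0 < c_s ∧
      (∫ z : EuclideanSpace ℝ (Fin d) × EuclideanSpace ℝ (Fin d),
          ‖z.1 - z.2‖ ^ (-s) * U z.1 * U z.2) ≤ c_s := by
  have hsd' : s < finrank ℝ (EuclideanSpace ℝ (Fin d)) := by
    rwa [finrank_euclideanSpace_fin]
  have hsep (N : ℕ) : Pairwise fun i j =>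
      ℓ * (N : ℝ) ^ (-(1 : ℝ) / finrank ℝ (EuclideanSpace ℝ (Fin d))) ≤ ‖x N i - x N j‖ := by
    rw [finrank_euclideanSpace_fin]
    exact hB N
  have h := stmt_6_general volume hs0 hsd' (ae_of_all _ hU_nonneg) hU_int
    (fun f => hA f f.continuous ⟨‖f‖, f.norm_coe_le_norm⟩) hℓ hsep
  exact ⟨h.1, h.2.limsup_eq.le, _, lt_max_of_lt_left one_pos, le_max_right _ _⟩
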